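/- There exists a j-invariant Lagrangian subspace E₊ ⊆ E (i.e. a Lagrangian subspace with j(E₊) = E₊) if and only if dim_ℂ E is divisible by 4 and the Hermitian form γ vanishes identically on some complex subspace of E of dimension (dim_ℂ E)/2 (i.e. γ has split signature). -/

import Mathlib

/-!
On a `J`-invariant subspace, isotropy for `ω` and for `γ(x, y) = ω(x, Jy)` are the same condition,
so an invariant Lagrangian `L` is itself the half-dimensional `γ`-isotropic subspace. If `A` is the
matrix of `J` in a basis, then `J² = -1` reads `A * conj A = -1`, and taking determinants shows that
a quaternionic space has even dimension. Applied to `L`, this gives `4 ∣ 2 * dim L = dim E`.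

Conversely, let `W` be maximal among the `J`-invariant `ω`-isotropic subspaces. If `x ∈ W^⊥` and
`γ(x, x) = 0`, then `W + ⟨x, Jx⟩` is again of this kind, so `x ∈ W`. Hence a `γ`-isotropic `N` meets
`W^⊥` inside `W`. The pairing `ω : N × W → K` has left kernel `N ∩ W^⊥ ⊆ N ∩ W`, and its right
kernel contains `J(N ∩ W)`. As the pairing has the same rank from both sides, `dim N ≤ dim W`.
-/

open Module

section Semilinear

variable {R R' M M' : Type*} [Semiring R] [Semiring R'] [AddCommMonoid M] [Module R M]
  [AddCommMonoid M'] [Module R' M'] {σ : R →+* R'} {σ' : R' →+* R} [RingHomInvPair σ σ']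
  [RingHomInvPair σ' σ]

theorem finrank_eq_of_semilinearEquiv (e : M ≃ₛₗ[σ] M') : finrank R M = finrank R' M' := by
  have hσ : Function.Bijective σ :=
    Function.bijective_iff_has_inverse.2
      ⟨σ', fun _ ↦ RingHomInvPair.comp_apply_eq, fun _ ↦ RingHomInvPair.comp_apply_eq₂⟩
  have hrank := lift_rank_eq_of_equiv_equiv σ e.toAddEquiv hσ fun a x ↦ e.map_smulₛₗ a x
  simpa only [Cardinal.toNat_lift, finrank] using congrArg Cardinal.toNat hrank

theorem finrank_map_of_injective_semilinear {f : M →ₛₗ[σ] M'} (hf : Function.Injective f)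
    (p : Submodule R M) : finrank R' (p.map f) = finrank R p :=
  (finrank_eq_of_semilinearEquiv (p.equivMapOfInjective f hf)).symm

end Semilinear

section Isotropic

variable {R M : Type*} [CommRing R] [AddCommGroup M] [Module R M]

/-- The submodule `W` is totally isotropic for the sesquilinear form `B`: the form vanishes
identically on `W`. Allowing a twist `σ` in the second variable covers both a bilinear form `ω` and
the Hermitian form `γ = ω.compl₂ J` of a conjugate-linear map `J`. -/
def IsTotallyIsotropic {σ : R →+* R} (B : M →ₗ[R] M →ₛₗ[σ] R) (W : Submodule R M) : Prop :=
  ∀ x ∈ W, ∀ y ∈ W, B x y = 0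

theorem isTotallyIsotropic_bot {σ : R →+* R} (B : M →ₗ[R] M →ₛₗ[σ] R) :
    IsTotallyIsotropic B ⊥ := by
  rintro x hx y -
  rw [(Submodule.mem_bot R).1 hx, map_zero, LinearMap.zero_apply]

theorem isTotallyIsotropic_span_pair {ω : LinearMap.BilinForm R M} (hω : ω.IsAlt) {x y : M}
    (hxy : ω x y = 0) : IsTotallyIsotropic ω (Submodule.span R {x, y}) := by
  have hyx : ω y x = 0 := hω.isRefl x y hxy
  intro u hu v hv
  obtain ⟨a, b, rfl⟩ := Submodule.mem_span_pair.1 hu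
  obtain ⟨c, d, rfl⟩ := Submodule.mem_span_pair.1 hv
  simp [hω.self_eq_zero, hxy, hyx]

theorem IsTotallyIsotropic.sup {ω : LinearMap.BilinForm R M} {N W : Submodule R M}
    (hω : ω.IsRefl) (hN : IsTotallyIsotropic ω N) (hW : IsTotallyIsotropic ω W)
    (hNW : N ≤ ω.orthogonal W) : IsTotallyIsotropic ω (N ⊔ W) := by
  intro x hx y hy
  obtain ⟨n, hn, w, hw, rfl⟩ := Submodule.mem_sup.1 hx
  obtain ⟨n', hn', w', hw', rfl⟩ := Submodule.mem_sup.1 hy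
  have hwn' : ω w n' = 0 := hNW hn' w hw
  have hnw' : ω n w' = 0 := hω _ _ (hNW hn w' hw')
  simp only [map_add, LinearMap.add_apply, hN n hn n' hn', hW w hw w' hw', hwn', hnw', add_zero]

end Isotropic

section Dimension

variable {K V : Type*} [Field K] [AddCommGroup V] [Module K V] {ω : LinearMap.BilinForm K V}

theorem finrank_comap_subtype (p q : Submodule K V) :
    finrank K (q.comap p.subtype) = finrank K (p ⊓ q : Submodule K V) := by
  rw [← Submodule.map_comap_subtype, Submodule.finrank_map_subtype_eq]

variable [FiniteDimensional K V]

theorem IsTotallyIsotropic.finrank_le (hω : ω.Nondegenerate) {W : Submodule K V}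
    (hW : IsTotallyIsotropic ω W) : finrank K W ≤ finrank K V / 2 := by
  have hle : W ≤ ω.orthogonal W := fun x hx w hw ↦ hW w hw x hx
  have hdim := Submodule.finrank_mono hle
  rw [LinearMap.BilinForm.finrank_orthogonal hω] at hdim
  have := Submodule.finrank_le W
  lia

theorem finrank_add_finrank_inf_orthogonal (hω : ω.IsRefl) (N W : Submodule K V) :
    finrank K N + finrank K (W ⊓ ω.orthogonal N : Submodule K V) =
      finrank K W + finrank K (N ⊓ ω.orthogonal W : Submodule K V) := by
  let β : N →ₗ[K] Dual K W := ω.domRestrict₁₂ N W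
  have hker : β.ker = (ω.orthogonal W).comap N.subtype := by
    ext n
    exact LinearMap.ext_iff.trans
      ⟨fun h w hw ↦ hω _ _ (h ⟨w, hw⟩), fun h w ↦ hω _ _ (h w w.2)⟩
  have hrange : β.range.dualCoannihilator = (ω.orthogonal N).comap W.subtype := by
    ext w
    rw [Submodule.mem_dualCoannihilator]
    exact Set.forall_mem_range.trans Subtype.forall
  have hN := β.finrank_range_add_finrank_ker
  have hW := Subspace.finrank_add_finrank_dualCoannihilator_eq β.range
  rw [hker, finrank_comap_subtype] at hN
  rw [hrange, finrank_comap_subtype] at hW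
  lia

end Dimension

section Quaternionic

variable {R M : Type*} [CommRing R] [StarRing R] [AddCommGroup M] [Module R M]

/-- A conjugate-linear map `J` is a quaternionic structure if `J² = -1`. Conjugation is the `star`
of `R`; for `R = ℂ` this is a left module structure over the quaternions. -/
def IsQuaternionic (J : M →ₗ⋆[R] M) : Prop :=
  ∀ x, J (J x) = -x

/-- The submodule `W` is totally isotropic for `ω` and stable under `J`. The maximal submodules of
this kind are the candidates for an invariant Lagrangian subspace. -/
structure IsInvariantIsotropic (ω : LinearMap.BilinForm R M) (J : M →ₗ⋆[R] M)
    (W : Submodule R M) : Prop where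
  isotropic : IsTotallyIsotropic ω W
  invariant : W ≤ W.comap J

namespace IsQuaternionic

variable {J : M →ₗ⋆[R] M}

protected theorem injective (hJ : IsQuaternionic J) : Function.Injective J := fun x y hxy ↦ by
  simpa only [hJ _, neg_inj] using congrArg J hxy

theorem image_eq_self_iff (hJ : IsQuaternionic J) {W : Submodule R M} :
    J '' (W : Set M) = W ↔ W ≤ W.comap J := by
  constructor
  · intro h x hx
    exact h.subset (Set.mem_image_of_mem J hx)
  · intro h
    refine Set.Subset.antisymm (Set.image_subset_iff (f := J).2 h) fun x hx ↦ ?_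
    exact ⟨-J x, W.neg_mem (h hx), by rw [map_neg, hJ, neg_neg]⟩

theorem toMatrix_mul_map_star {ι : Type*} [Fintype ι] [DecidableEq ι] (hJ : IsQuaternionic J)
    (b : Basis ι R M) :
    b.toMatrix (J ∘ b) * (b.toMatrix (J ∘ b)).map (starRingEnd R) = -1 := by
  set A := b.toMatrix (J ∘ b)
  have hJb (k : ι) : J (b k) = ∑ l, A l k • b l := (b.sum_repr (J (b k))).symm
  ext i k
  calc (A * A.map (starRingEnd R)) i k = b.repr (∑ l, starRingEnd R (A l k) • J (b l)) i := by
        simp [Matrix.mul_apply, A, Basis.toMatrix_apply, mul_comm]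
    _ = b.repr (J (J (b k))) i := by simp only [hJb k, map_sum, map_smulₛₗ]
    _ = (-1 : Matrix ι ι R) i k := by
        simp [hJ _, Finsupp.single_apply, Matrix.one_apply, eq_comm]

theorem span_pair_le_comap (hJ : IsQuaternionic J) (x : M) :
    Submodule.span R {x, J x} ≤ (Submodule.span R {x, J x}).comap J := by
  refine Submodule.span_le.2 (Set.pair_subset ?_ ?_)
  · exact Submodule.subset_span (Set.mem_insert_of_mem x rfl)
  · simpa only [SetLike.mem_coe, Submodule.mem_comap, hJ x, neg_mem_iff] using
      Submodule.subset_span (Set.mem_insert x _)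

variable {ω : LinearMap.BilinForm R M}

theorem orthogonal_le_comap (hJ : IsQuaternionic J)
    (hJω : ∀ x y, ω (J x) (J y) = starRingEnd R (ω x y)) {W : Submodule R M}
    (hW : W ≤ W.comap J) : ω.orthogonal W ≤ (ω.orthogonal W).comap J := by
  intro x hx w hw
  have hJw : ω (J w) x = 0 := hx (J w) (hW hw)
  simpa [hJ _, hJw] using hJω (J w) x

theorem isInvariantIsotropic_span_pair_sup (hJ : IsQuaternionic J) (hω : ω.IsAlt)
    (hJω : ∀ x y, ω (J x) (J y) = starRingEnd R (ω x y)) {W : Submodule R M}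
    (hW : IsInvariantIsotropic ω J W) {x : M} (hx : x ∈ ω.orthogonal W) (hxx : ω x (J x) = 0) :
    IsInvariantIsotropic ω J (Submodule.span R {x, J x} ⊔ W) where
  isotropic := by
    refine (isTotallyIsotropic_span_pair hω hxx).sup hω.isRefl hW.isotropic ?_
    exact Submodule.span_le.2
      (Set.pair_subset hx (hJ.orthogonal_le_comap hJω hW.invariant hx))
  invariant := sup_le ((hJ.span_pair_le_comap x).trans (Submodule.comap_mono le_sup_left))
    (hW.invariant.trans (Submodule.comap_mono le_sup_right))

theorem mem_of_maximal (hJ : IsQuaternionic J) (hω : ω.IsAlt)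
    (hJω : ∀ x y, ω (J x) (J y) = starRingEnd R (ω x y)) {W : Submodule R M}
    (hW : Maximal (IsInvariantIsotropic ω J) W) {x : M} (hx : x ∈ ω.orthogonal W)
    (hxx : ω x (J x) = 0) : x ∈ W :=
  hW.le_of_ge (hJ.isInvariantIsotropic_span_pair_sup hω hJω hW.prop hx hxx) le_sup_right
    (Submodule.mem_sup_left (Submodule.subset_span (Set.mem_insert x _)))

end IsQuaternionic

end Quaternionic

section QuaternionicDimension

variable {K E : Type*} [Field K] [StarRing K] [AddCommGroup E] [Module K E]
  [FiniteDimensional K E] {J : E →ₗ⋆[K] E}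

namespace IsQuaternionic

theorem even_finrank (hJ : IsQuaternionic J)
    (hK : ∀ a : K, a * starRingEnd K a ≠ -1) : Even (finrank K E) := by
  let b := finBasis K E
  let A := b.toMatrix (J ∘ b)
  have hdet : A.det * starRingEnd K A.det = (-1) ^ finrank K E := by
    simpa [A, RingHom.map_det, Matrix.det_neg] using
      congrArg Matrix.det (hJ.toMatrix_mul_map_star b)
  by_contra hodd
  exact hK A.det (by rw [hdet, (Nat.not_even_iff_odd.1 hodd).neg_one_pow])

theorem four_dvd_finrank (hJ : IsQuaternionic J)
    (hK : ∀ a : K, a * starRingEnd K a ≠ -1) {W : Submodule K E} (hW : W ≤ W.comap J)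
    (hdim : finrank K W = finrank K E / 2) : 4 ∣ finrank K E := by
  have hJW : IsQuaternionic (J.restrict hW) := fun x ↦ Subtype.ext (hJ x)
  obtain ⟨m, hm⟩ := hJ.even_finrank hK
  obtain ⟨n, hn⟩ := hJW.even_finrank hK
  lia

variable {ω : LinearMap.BilinForm K E}

theorem finrank_le_of_maximal (hJ : IsQuaternionic J) (hω : ω.IsAlt)
    (hJω : ∀ x y, ω (J x) (J y) = starRingEnd K (ω x y)) {N W : Submodule K E}
    (hN : IsTotallyIsotropic (ω.compl₂ J) N) (hW : Maximal (IsInvariantIsotropic ω J) W) :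
    finrank K N ≤ finrank K W := by
  have hNW : N ⊓ ω.orthogonal W ≤ N ⊓ W := fun x hx ↦
    ⟨hx.1, hJ.mem_of_maximal hω hJω hW hx.2 (hN x hx.1 x hx.1)⟩
  have hJNW : (N ⊓ W).map J ≤ W ⊓ ω.orthogonal N :=
    Submodule.map_le_iff_le_comap.2 fun x hx ↦
      ⟨hW.prop.invariant hx.2, fun n hn ↦ hN n hn x hx.1⟩
  have hle := calc
    finrank K (N ⊓ ω.orthogonal W : Submodule K E) ≤ finrank K (N ⊓ W : Submodule K E) :=
        Submodule.finrank_mono hNW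
    _ = finrank K ((N ⊓ W).map J) := (finrank_map_of_injective_semilinear hJ.injective _).symm
    _ ≤ finrank K (W ⊓ ω.orthogonal N : Submodule K E) := Submodule.finrank_mono hJNW
  have := finrank_add_finrank_inf_orthogonal hω.isRefl N W
  lia

theorem exists_invariantIsotropic_finrank_ge (hJ : IsQuaternionic J) (hω : ω.IsAlt)
    (hJω : ∀ x y, ω (J x) (J y) = starRingEnd K (ω x y)) {N : Submodule K E}
    (hN : IsTotallyIsotropic (ω.compl₂ J) N) :
    ∃ W, IsInvariantIsotropic ω J W ∧ finrank K N ≤ finrank K W := by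
  obtain ⟨W, hW⟩ := exists_maximal_of_wellFoundedGT (IsInvariantIsotropic ω J)
    ⟨⊥, isTotallyIsotropic_bot ω, bot_le⟩
  exact ⟨W, hW.prop, hJ.finrank_le_of_maximal hω hJω hN hW⟩

end IsQuaternionic

theorem stmt_14_general (hK : ∀ a : K, a * starRingEnd K a ≠ -1)
    {ω : LinearMap.BilinForm K E} (hω_alt : ω.IsAlt) (hω_nd : ω.SeparatingLeft)
    (hJ : IsQuaternionic J)
    (hJω : ∀ x y, ω (J x) (J y) = starRingEnd K (ω x y)) :
    [∃ L : Submodule K E, IsTotallyIsotropic ω L ∧ finrank K L = finrank K E / 2 ∧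
        J '' (L : Set E) = L,
      4 ∣ finrank K E ∧ ∃ N : Submodule K E, finrank K N = finrank K E / 2 ∧
        IsTotallyIsotropic (ω.compl₂ J) N,
      ∃ N : Submodule K E, finrank K N = finrank K E / 2 ∧
        IsTotallyIsotropic (ω.compl₂ J) N].TFAE := by
  tfae_have 1 → 2 := by
    rintro ⟨L, hL, hdim, hJL⟩
    have hinv := hJ.image_eq_self_iff.1 hJL
    exact ⟨hJ.four_dvd_finrank hK hinv hdim, L, hdim, fun x hx y hy ↦ hL x hx _ (hinv hy)⟩
  tfae_have 2 → 3 := And.right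
  tfae_have 3 → 1 := by
    rintro ⟨N, hdim, hN⟩
    have hω_nd' : ω.Nondegenerate := hω_alt.isRefl.nondegenerate_iff_separatingLeft.2 hω_nd
    obtain ⟨W, hW, hNW⟩ := hJ.exists_invariantIsotropic_finrank_ge hω_alt hJω hN
    exact ⟨W, hW.isotropic, (hW.isotropic.finrank_le hω_nd').antisymm (hdim ▸ hNW),
      hJ.image_eq_self_iff.2 hW.invariant⟩
  tfae_finish

end QuaternionicDimension

theorem mul_conj_ne_neg_one {𝕜 : Type*} [RCLike 𝕜] (a : 𝕜) : a * starRingEnd 𝕜 a ≠ -1 := by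
  rw [RCLike.mul_conj]
  intro h
  have hnorm : ‖a‖ ^ 2 = -1 := by exact_mod_cast h
  linarith [sq_nonneg ‖a‖]

/-- There exists a `j`-invariant Lagrangian subspace `E₊ ⊆ E` if and only if
`dim_ℂ E` is divisible by 4 and the Hermitian form `γ(x,y) = ω(x,jy)` vanishes
identically on some complex subspace of dimension `(dim_ℂ E)/2` (split signature). -/
theorem stmt_14 (E : Type*) [AddCommGroup E] [Module ℂ E] [FiniteDimensional ℂ E]
    (ω : E →ₗ[ℂ] E →ₗ[ℂ] ℂ)
    (hω_alt : ∀ x : E, ω x x = 0)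
    (hω_nd : ∀ x : E, (∀ y : E, ω x y = 0) → x = 0)
    (j : E → E)
    (hj_add : ∀ x y : E, j (x + y) = j x + j y)
    (hj_smul : ∀ (c : ℂ) (x : E), j (c • x) = (starRingEnd ℂ c) • j x)
    (hjj : ∀ x : E, j (j x) = -x)
    (hjω : ∀ x y : E, ω (j x) (j y) = starRingEnd ℂ (ω x y)) :
    (∃ Eplus : Submodule ℂ E,
        (∀ x ∈ Eplus, ∀ y ∈ Eplus, ω x y = 0) ∧
        Module.finrank ℂ Eplus = Module.finrank ℂ E / 2 ∧
        j '' (Eplus : Set E) = (Eplus : Set E)) ↔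
    (4 ∣ Module.finrank ℂ E ∧
      ∃ N : Submodule ℂ E,
        Module.finrank ℂ N = Module.finrank ℂ E / 2 ∧
        ∀ x ∈ N, ∀ y ∈ N, ω x (j y) = 0) :=
  let J : E →ₗ⋆[ℂ] E := { toFun := j, map_add' := hj_add, map_smul' := hj_smul }
  (stmt_14_general mul_conj_ne_neg_one hω_alt hω_nd (J := J) hjj hjω).out 0 1
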